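/- Let λ₁,...,λ_N be distinct real numbers with |λ_j - λ_k| ≥ δ > 0 for j ≠ k, and c₁,...,c_N ∈ ℂ. Then for every T > 0, ∫₀^T |Σ_{k=1}^N c_k e^{iλ_k s}|² ds ≥ (T - 2π/δ)·Σ_{k=1}^N |c_k|². -/

import Mathlib

open Complex Real

lemma half_sum_aux {N : ℕ} (f : Fin N → ℝ) (δ : ℝ) (hδ : 0 < δ)
    (S : Finset (Fin N))
    (hpos : ∀ r ∈ S, δ ≤ f r)
    (hsep : ∀ j k : Fin N, j ≠ k → δ ≤ |f j - f k|) :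
    ∑ r ∈ S, ((f r)⁻¹) ^ 2 ≤ π ^ 2 / 6 / δ ^ 2 := by
  have hinj : Set.InjOn (fun r => ⌊f r / δ⌋₊) (S : Set (Fin N)) := by
    intro a ha b hb hab
    by_contra hne
    have h1 := hsep a b hne
    have ha0 : 0 ≤ f a / δ := div_nonneg (hδ.le.trans (hpos a ha)) hδ.le
    have hb0 : 0 ≤ f b / δ := div_nonneg (hδ.le.trans (hpos b hb)) hδ.le
    have a1 := Nat.floor_le ha0
    have a2 := Nat.lt_floor_add_one (f a / δ)
    have b1 := Nat.floor_le hb0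
    have b2 := Nat.lt_floor_add_one (f b / δ)
    simp only at hab
    rw [hab] at a1 a2
    have : |f a / δ - f b / δ| < 1 := by
      rw [abs_lt]; constructor <;> linarith
    rw [← sub_div, abs_div, abs_of_pos hδ, div_lt_one hδ] at this
    linarith
  have hs := hasSum_zeta_two
  have h2 : ∑ n ∈ S.image (fun r => ⌊f r / δ⌋₊), (1 : ℝ) / (n : ℝ) ^ 2 ≤ π ^ 2 / 6 :=
    sum_le_hasSum _ (fun i _ => by positivity) hs
  rw [Finset.sum_image hinj] at h2
  rw [le_div_iff₀ (by positivity), Finset.sum_mul]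
  refine le_trans (Finset.sum_le_sum fun r hr => ?_) h2
  have h1 := hpos r hr
  have hf : 0 < f r := hδ.trans_le h1
  have hle := Nat.floor_le (div_nonneg hf.le hδ.le)
  have hn : 1 ≤ ⌊f r / δ⌋₊ := by
    rw [Nat.one_le_floor_iff, one_le_div hδ]; exact h1
  have hn' : (0 : ℝ) < (⌊f r / δ⌋₊ : ℝ) := by exact_mod_cast hn
  rw [← mul_pow, one_div, ← inv_pow]
  refine pow_le_pow_left₀ (by positivity) ?_ 2
  rw [le_inv_comm₀ (by positivity) hn', mul_inv, inv_inv]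
  simpa [div_eq_mul_inv] using hle

lemma full_sum_aux {N : ℕ} (lam : Fin N → ℝ) (δ : ℝ) (hδ : 0 < δ)
    (hsep : ∀ j k : Fin N, j ≠ k → δ ≤ |lam j - lam k|) (s : Fin N) :
    ∑ r, ((lam r - lam s)⁻¹) ^ 2 ≤ π ^ 2 / 3 / δ ^ 2 := by
  have h1 := half_sum_aux (fun r => lam r - lam s) δ hδ
    (Finset.univ.filter fun r => lam s < lam r)
    (by
      intro r hr
      simp only [Finset.mem_filter, Finset.mem_univ, true_and] at hr
      have := hsep r s (by rintro rfl; exact lt_irrefl _ hr)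
      rwa [abs_of_pos (by linarith)] at this)
    (by intro j k hjk; simpa using hsep j k hjk)
  have h2 := half_sum_aux (fun r => lam s - lam r) δ hδ
    (Finset.univ.filter fun r => ¬ lam s < lam r ∧ r ≠ s)
    (by
      intro r hr
      simp only [Finset.mem_filter, Finset.mem_univ, true_and, not_lt] at hr
      have := hsep s r hr.2.symm
      rwa [abs_of_nonneg (by linarith [hr.1])] at this)
    (by intro j k hjk; simpa using hsep k j hjk.symm)
  have h3 : ∑ r, ((lam r - lam s)⁻¹) ^ 2 =
      ∑ r ∈ Finset.univ.filter (fun r => lam s < lam r), ((lam r - lam s)⁻¹) ^ 2 +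
      ∑ r ∈ Finset.univ.filter (fun r => ¬ lam s < lam r ∧ r ≠ s), ((lam s - lam r)⁻¹) ^ 2 := by
    rw [Finset.sum_filter, Finset.sum_filter, ← Finset.sum_add_distrib]
    refine Finset.sum_congr rfl fun r _ => ?_
    by_cases h : lam s < lam r
    · simp [h]
    · by_cases hr : r = s
      · subst hr; simp
      · simp only [h, hr, if_false, not_false_eq_true, ne_eq, and_self, if_true, zero_add]
        rw [← neg_sub, inv_neg, neg_sq]
  rw [h3]
  calc _ ≤ π ^ 2 / 6 / δ ^ 2 + π ^ 2 / 6 / δ ^ 2 := add_le_add h1 h2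
    _ = _ := by ring

lemma kernel_aux {N : ℕ} (lam : Fin N → ℝ) (hinj : Function.Injective lam) (s t : Fin N) :
    ∑ r, (lam r - lam s)⁻¹ * (lam r - lam t)⁻¹ =
      (lam s - lam t)⁻¹ * (∑ r, (lam r - lam s)⁻¹ - ∑ r, (lam r - lam t)⁻¹)
      + 2 * ((lam s - lam t)⁻¹) ^ 2 + if s = t then ∑ r, ((lam r - lam s)⁻¹) ^ 2 else 0 := by
  by_cases hst : s = t
  · subst hst; simp [pow_two]
  · have hne : lam s - lam t ≠ 0 := sub_ne_zero.2 (fun h => hst (hinj h))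
    have key : ∀ r, (lam r - lam s)⁻¹ * (lam r - lam t)⁻¹ =
        (lam s - lam t)⁻¹ * ((lam r - lam s)⁻¹ - (lam r - lam t)⁻¹)
        + (if r = s then ((lam s - lam t)⁻¹) ^ 2 else 0)
        + (if r = t then ((lam s - lam t)⁻¹) ^ 2 else 0) := by
      intro r
      by_cases h1 : r = s
      · subst h1
        simp only [hst, sub_self, if_false, if_true, inv_zero, zero_mul]
        ring
      by_cases h2 : r = t
      · subst h2
        simp only [h1, sub_self, if_false, if_true, inv_zero, mul_zero]
        rw [← neg_sub (lam s) (lam r), inv_neg]; ring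
      have e1 : lam r - lam s ≠ 0 := sub_ne_zero.2 (fun h => h1 (hinj h))
      have e2 : lam r - lam t ≠ 0 := sub_ne_zero.2 (fun h => h2 (hinj h))
      simp only [h1, h2, if_false]
      field_simp
      ring
    rw [Finset.sum_congr rfl fun r _ => key r]
    simp only [Finset.sum_add_distrib, ← Finset.mul_sum, Finset.sum_sub_distrib,
      Finset.sum_ite_eq', Finset.mem_univ, if_true, hst, if_false]
    ring

lemma eig_aux {N : ℕ} (lam : Fin N → ℝ) (δ : ℝ) (hδ : 0 < δ)
    (hsep : ∀ j k : Fin N, j ≠ k → δ ≤ |lam j - lam k|) (u : Fin N → ℂ) (μ : ℝ)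
    (hu : ∀ r, ∑ s, (((lam r - lam s)⁻¹ : ℝ) : ℂ) * u s = I * μ * u r) :
    μ ^ 2 * ∑ r, ‖u r‖ ^ 2 ≤ (π / δ) ^ 2 * ∑ r, ‖u r‖ ^ 2 := by
  have hinj : Function.Injective lam := by
    intro a b hab
    by_contra hne
    have := hsep a b hne
    rw [hab, sub_self, abs_zero] at this
    linarith
  set g : Fin N → Fin N → ℝ := fun r s => (lam r - lam s)⁻¹ with hg
  set B : Fin N → ℝ := fun s => ∑ r, g r s with hB
  set D : Fin N → ℝ := fun s => ∑ r, (g r s) ^ 2 with hD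
  have hanti : ∀ r s, g r s = - g s r := by
    intro r s; simp only [hg]; rw [← neg_sub, inv_neg]
  have hu1 : ∀ r, ∑ s, (g r s : ℂ) * u s = I * μ * u r := hu
  have hu2 : ∀ r, ∑ s, (g r s : ℂ) * (starRingEnd ℂ) (u s)
      = -(I * μ * (starRingEnd ℂ) (u r)) := by
    intro r
    have := congrArg (starRingEnd ℂ) (hu1 r)
    simpa [map_sum, map_mul] using this
  have hk : ∀ s t, ∑ r, g r s * g r t =
      g s t * (B s - B t) + 2 * (g s t) ^ 2 + if s = t then D s else 0 :=
    fun s t => kernel_aux lam hinj s t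
  have hkC : ∀ s t, ∑ r, (g r s : ℂ) * (g r t : ℂ) =
      (g s t : ℂ) * (B s - B t) + 2 * (g s t : ℂ) ^ 2 + if s = t then (D s : ℂ) else 0 := by
    intro s t
    have := congrArg (fun x : ℝ => (x : ℂ)) (hk s t)
    split_ifs at this ⊢ <;> push_cast at this ⊢ <;> exact this
  have e1 : ∑ r, (∑ s, (g r s : ℂ) * u s) * (∑ t, (g r t : ℂ) * (starRingEnd ℂ) (u t))
      = ∑ s, ∑ t, u s * (starRingEnd ℂ) (u t) * ∑ r, (g r s : ℂ) * (g r t : ℂ) := by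
    simp only [Finset.sum_mul_sum]
    simp only [Finset.mul_sum]
    rw [Finset.sum_comm]
    refine Finset.sum_congr rfl fun s _ => ?_
    rw [Finset.sum_comm]
    refine Finset.sum_congr rfl fun t _ => Finset.sum_congr rfl fun r _ => ?_
    ring
  have e2 : ∑ r, (∑ s, (g r s : ℂ) * u s) * (∑ t, (g r t : ℂ) * (starRingEnd ℂ) (u t))
      = ((μ ^ 2 * ∑ r, ‖u r‖ ^ 2 : ℝ) : ℂ) := by
    push_cast
    rw [Finset.mul_sum]
    refine Finset.sum_congr rfl fun r _ => ?_
    rw [hu1, hu2, ← Complex.mul_conj']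
    linear_combination (-(μ : ℂ) ^ 2 * u r * (starRingEnd ℂ) (u r)) * I_sq
  have t1 : ∑ s, ∑ t, u s * (starRingEnd ℂ) (u t) * ((g s t : ℂ) * B s)
      = ∑ s, -(I * μ * B s * (u s * (starRingEnd ℂ) (u s))) := by
    refine Finset.sum_congr rfl fun s _ => ?_
    calc _ = u s * B s * ∑ t, (g s t : ℂ) * (starRingEnd ℂ) (u t) := by
          rw [Finset.mul_sum]; exact Finset.sum_congr rfl fun t _ => by ring
      _ = _ := by rw [hu2]; ring
  have t2 : ∑ s, ∑ t, u s * (starRingEnd ℂ) (u t) * ((g s t : ℂ) * B t)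
      = ∑ s, -(I * μ * B s * (u s * (starRingEnd ℂ) (u s))) := by
    rw [Finset.sum_comm]
    refine Finset.sum_congr rfl fun t _ => ?_
    calc _ = -((starRingEnd ℂ) (u t) * B t * ∑ s, (g t s : ℂ) * u s) := by
          rw [Finset.mul_sum, ← Finset.sum_neg_distrib]
          refine Finset.sum_congr rfl fun s _ => ?_
          rw [hanti s t]; push_cast; ring
      _ = _ := by rw [hu1]; ring
  have e3 : ∑ s, ∑ t, u s * (starRingEnd ℂ) (u t) * ∑ r, (g r s : ℂ) * (g r t : ℂ)
      = ∑ s, ∑ t, 2 * ((g s t ^ 2 : ℝ) : ℂ) * (u s * (starRingEnd ℂ) (u t))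
        + ((∑ s, D s * ‖u s‖ ^ 2 : ℝ) : ℂ) := by
    have : ∀ s t, u s * (starRingEnd ℂ) (u t) * ∑ r, (g r s : ℂ) * (g r t : ℂ)
        = u s * (starRingEnd ℂ) (u t) * ((g s t : ℂ) * B s)
          - u s * (starRingEnd ℂ) (u t) * ((g s t : ℂ) * B t)
          + 2 * ((g s t ^ 2 : ℝ) : ℂ) * (u s * (starRingEnd ℂ) (u t))
          + (if s = t then (D s : ℂ) * (u s * (starRingEnd ℂ) (u t)) else 0) := by
      intro s t
      rw [hkC]
      split_ifs <;> push_cast <;> ring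
    simp only [this, Finset.sum_add_distrib, Finset.sum_sub_distrib, t1, t2, sub_self, zero_add,
      Finset.sum_ite_eq, Finset.mem_univ, if_true]
    congr 1
    push_cast
    exact Finset.sum_congr rfl fun s _ => by rw [← Complex.mul_conj']
  have e4 := e2.symm.trans (e1.trans e3)
  have e5 := congrArg Complex.re e4
  rw [Complex.add_re, Complex.ofReal_re, Complex.ofReal_re] at e5
  have hDle : ∀ s, D s ≤ π ^ 2 / 3 / δ ^ 2 := fun s => full_sum_aux lam δ hδ hsep s
  have hD' : ∀ s, ∑ t, g s t ^ 2 = D s := fun s =>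
    Finset.sum_congr rfl fun t _ => by rw [hanti s t, neg_sq]
  have hre : (∑ s, ∑ t, 2 * ((g s t ^ 2 : ℝ) : ℂ) * (u s * (starRingEnd ℂ) (u t))).re
      ≤ ∑ s, ∑ t, (g s t ^ 2 * ‖u s‖ ^ 2 + g s t ^ 2 * ‖u t‖ ^ 2) := by
    rw [Complex.re_sum]
    refine Finset.sum_le_sum fun s _ => ?_
    rw [Complex.re_sum]
    refine Finset.sum_le_sum fun t _ => ?_
    have h1 : (2 * ((g s t ^ 2 : ℝ) : ℂ) * (u s * (starRingEnd ℂ) (u t))).re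
        = g s t ^ 2 * (2 * (u s * (starRingEnd ℂ) (u t)).re) := by
      rw [mul_assoc, ← Complex.ofReal_ofNat, Complex.re_ofReal_mul, Complex.re_ofReal_mul]; ring
    have h2 : (u s * (starRingEnd ℂ) (u t)).re ≤ ‖u s‖ * ‖u t‖ := by
      refine (Complex.re_le_norm _).trans ?_
      simp
    rw [h1, ← mul_add]
    refine mul_le_mul_of_nonneg_left ?_ (sq_nonneg _)
    nlinarith [sq_nonneg (‖u s‖ - ‖u t‖)]
  have hsum : ∑ s, ∑ t, (g s t ^ 2 * ‖u s‖ ^ 2 + g s t ^ 2 * ‖u t‖ ^ 2)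
      = 2 * ∑ s, D s * ‖u s‖ ^ 2 := by
    simp only [Finset.sum_add_distrib]
    rw [Finset.sum_comm (f := fun s t => g s t ^ 2 * ‖u t‖ ^ 2)]
    simp only [← Finset.sum_mul, hD']
    simp only [hD]
    ring
  have hfin : ∑ s, D s * ‖u s‖ ^ 2 ≤ π ^ 2 / 3 / δ ^ 2 * ∑ s, ‖u s‖ ^ 2 := by
    rw [Finset.mul_sum]
    exact Finset.sum_le_sum fun s _ => mul_le_mul_of_nonneg_right (hDle s) (sq_nonneg _)
  have hc : (π / δ) ^ 2 * ∑ r, ‖u r‖ ^ 2 = 3 * (π ^ 2 / 3 / δ ^ 2 * ∑ s, ‖u s‖ ^ 2) := by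
    rw [div_pow]; ring
  rw [hc]
  linarith

open scoped ComplexOrder in
lemma hilbert_aux {N : ℕ} (lam : Fin N → ℝ) (δ : ℝ) (hδ : 0 < δ)
    (hsep : ∀ j k : Fin N, j ≠ k → δ ≤ |lam j - lam k|) (x : Fin N → ℂ) :
    (∑ k, ∑ j, I * (((lam k - lam j)⁻¹ : ℝ) : ℂ) * (x j * (starRingEnd ℂ) (x k))).re
      ≤ π / δ * ∑ k, ‖x k‖ ^ 2 := by
  set K : Matrix (Fin N) (Fin N) ℂ := fun k j =>
    (if k = j then ((π / δ : ℝ) : ℂ) else 0) - I * (((lam k - lam j)⁻¹ : ℝ) : ℂ) with hK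
  have hmul : ∀ (v : Fin N → ℂ) k, (K.mulVec v) k = ((π / δ : ℝ) : ℂ) * v k
      - I * ∑ j, (((lam k - lam j)⁻¹ : ℝ) : ℂ) * v j := by
    intro v k
    simp only [Matrix.mulVec, dotProduct, hK, sub_mul, Finset.sum_sub_distrib, ite_mul, zero_mul,
      Finset.sum_ite_eq, Finset.mem_univ, if_true, Finset.mul_sum, mul_assoc]
  have hH : K.IsHermitian := by
    ext k j
    rw [Matrix.conjTranspose_apply]
    simp only [hK, star_sub, star_mul']
    have : (((lam j - lam k)⁻¹ : ℝ) : ℂ) = -(((lam k - lam j)⁻¹ : ℝ) : ℂ) := by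
      rw [← neg_sub, inv_neg]; push_cast; rfl
    rw [this]
    by_cases h : k = j
    · subst h; simp [Complex.conj_ofReal]
    · simp [h, Ne.symm h, Complex.conj_ofReal]
  have hpd : 0 < π / δ := div_pos Real.pi_pos hδ
  have hP : K.PosSemidef := by
    rw [hH.posSemidef_iff_eigenvalues_nonneg]
    intro i
    have hv := hH.mulVec_eigenvectorBasis i
    set ν := hH.eigenvalues i
    set v : Fin N → ℂ := (hH.eigenvectorBasis i).ofLp with hvdef
    have hn : ‖hH.eigenvectorBasis i‖ = 1 := hH.eigenvectorBasis.orthonormal.1 i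
    have hn2 : ∑ r, ‖v r‖ ^ 2 = 1 := by
      rw [← EuclideanSpace.norm_sq_eq, hn]; norm_num
    have := eig_aux lam δ hδ hsep v (ν - π / δ) (by
      intro r
      have h1 := congrFun hv r
      rw [hmul] at h1
      simp only [Pi.smul_apply, Complex.real_smul] at h1
      push_cast at h1 ⊢
      linear_combination I * h1 + (∑ j, ((lam r : ℂ) - lam j)⁻¹ * v j) * I_sq)
    rw [hn2, mul_one, mul_one] at this
    have := abs_le_of_sq_le_sq' this hpd.le
    show 0 ≤ ν
    linarith [this.1]
  have h0 := hP.dotProduct_mulVec_nonneg x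
  have h1 := (Complex.le_def.1 h0).1
  have h2 : star x ⬝ᵥ K.mulVec x = ((π / δ * ∑ k, ‖x k‖ ^ 2 : ℝ) : ℂ)
      - ∑ k, ∑ j, I * (((lam k - lam j)⁻¹ : ℝ) : ℂ) * (x j * (starRingEnd ℂ) (x k)) := by
    rw [Complex.ofReal_mul, Complex.ofReal_sum, Finset.mul_sum, ← Finset.sum_sub_distrib,
      dotProduct]
    refine Finset.sum_congr rfl fun k _ => ?_
    rw [hmul, mul_sub, Complex.ofReal_pow, ← Complex.mul_conj', Finset.mul_sum, Finset.mul_sum]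
    simp only [Pi.star_apply, RCLike.star_def]
    congr 1
    · ring
    · exact Finset.sum_congr rfl fun j _ => by ring
  rw [h2, Complex.sub_re, Complex.ofReal_re, Complex.zero_re] at h1
  linarith

/-- Montgomery–Vaughan type lower bound for the mean square of an exponential sum
with `δ`-separated frequencies. -/
theorem stmt_9 (N : ℕ) (lam : Fin N → ℝ) (c : Fin N → ℂ) (δ : ℝ) (hδ : 0 < δ)
    (hsep : ∀ j k : Fin N, j ≠ k → δ ≤ |lam j - lam k|) :
    ∀ T : ℝ, 0 < T →
      (T - 2 * π / δ) * ∑ k, ‖c k‖ ^ 2 ≤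
        ∫ s in (0:ℝ)..T, ‖∑ k, c k * Complex.exp (Complex.I * (lam k * s))‖ ^ 2 := by
  intro T hT
  have hinj : Function.Injective lam := by
    intro a b hab
    by_contra hne
    have := hsep a b hne
    rw [hab, sub_self, abs_zero] at this
    linarith
  set a : Fin N → ℂ := fun k => c k * Complex.exp (Complex.I * (lam k * T)) with ha
  have hconj : ∀ (k : Fin N) (s : ℝ), (starRingEnd ℂ) (Complex.exp (Complex.I * (lam k * s)))
      = Complex.exp (-(Complex.I * (lam k * s))) := by
    intro k s
    rw [← Complex.exp_conj]
    simp [Complex.conj_ofReal]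
  have hnorm : ∀ s : ℝ, ((‖∑ k, c k * Complex.exp (Complex.I * (lam k * s))‖ ^ 2 : ℝ) : ℂ)
      = ∑ k, ∑ j, (c j * (starRingEnd ℂ) (c k)) *
          Complex.exp ((I * ((lam j - lam k : ℝ) : ℂ)) * s) := by
    intro s
    rw [Complex.ofReal_pow, ← Complex.mul_conj', map_sum, mul_comm, Finset.sum_mul_sum]
    refine Finset.sum_congr rfl fun k _ => Finset.sum_congr rfl fun j _ => ?_
    have : Complex.exp ((I * ((lam j - lam k : ℝ) : ℂ)) * s)
        = Complex.exp (Complex.I * (lam j * s)) * Complex.exp (-(Complex.I * (lam k * s))) := by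
      rw [← Complex.exp_add]; congr 1; push_cast; ring
    rw [map_mul, hconj, this]
    ring
  have hint : ∀ k j, ∫ s in (0:ℝ)..T, (c j * (starRingEnd ℂ) (c k)) *
          Complex.exp ((I * ((lam j - lam k : ℝ) : ℂ)) * s)
      = (if k = j then (T : ℂ) * (c j * (starRingEnd ℂ) (c k)) else 0)
        + I * (((lam k - lam j)⁻¹ : ℝ) : ℂ) * (a j * (starRingEnd ℂ) (a k))
        - I * (((lam k - lam j)⁻¹ : ℝ) : ℂ) * (c j * (starRingEnd ℂ) (c k)) := by
    intro k j
    by_cases h : k = j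
    · subst h; simp; ring
    · have hne : lam j - lam k ≠ 0 := sub_ne_zero.2 (fun h' => h (hinj h').symm)
      have hneC : ((lam j - lam k : ℝ) : ℂ) ≠ 0 := by exact_mod_cast hne
      rw [intervalIntegral.integral_const_mul, integral_exp_mul_complex (mul_ne_zero I_ne_zero hneC)]
      have e : Complex.exp ((I * ((lam j - lam k : ℝ) : ℂ)) * T)
        = Complex.exp (Complex.I * (lam j * T)) * Complex.exp (-(Complex.I * (lam k * T))) := by
        rw [← Complex.exp_add]; congr 1; push_cast; ring
      have e' : (((lam k - lam j)⁻¹ : ℝ) : ℂ) = -(((lam j - lam k : ℝ) : ℂ))⁻¹ := by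
        rw [← neg_sub, inv_neg]; push_cast; rfl
      simp only [h, if_false, ha, map_mul, hconj, e, e', div_eq_mul_inv, mul_inv, Complex.inv_I]
      simp
      ring
  have hI : ((∫ s in (0:ℝ)..T, ‖∑ k, c k * Complex.exp (Complex.I * (lam k * s))‖ ^ 2 : ℝ) : ℂ)
      = ((T * ∑ k, ‖c k‖ ^ 2 : ℝ) : ℂ)
        + ∑ k, ∑ j, I * (((lam k - lam j)⁻¹ : ℝ) : ℂ) * (a j * (starRingEnd ℂ) (a k))
        - ∑ k, ∑ j, I * (((lam k - lam j)⁻¹ : ℝ) : ℂ) * (c j * (starRingEnd ℂ) (c k)) := by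
    rw [← intervalIntegral.integral_ofReal]
    simp only [hnorm]
    rw [intervalIntegral.integral_finsetSum
      (fun k _ => Continuous.intervalIntegrable (by fun_prop) _ _)]
    have : ∀ k, ∫ s in (0:ℝ)..T, ∑ j, (c j * (starRingEnd ℂ) (c k)) *
          Complex.exp ((I * ((lam j - lam k : ℝ) : ℂ)) * s) = ∑ j, ∫ s in (0:ℝ)..T,
          (c j * (starRingEnd ℂ) (c k)) *
          Complex.exp ((I * ((lam j - lam k : ℝ) : ℂ)) * s) := fun k =>
      intervalIntegral.integral_finsetSum
        (fun j _ => Continuous.intervalIntegrable (by fun_prop) _ _)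
    simp only [this, hint, Finset.sum_add_distrib, Finset.sum_sub_distrib,
      Finset.sum_ite_eq, Finset.mem_univ, if_true]
    congr 2
    rw [← Finset.mul_sum]
    push_cast
    congr 1
    exact Finset.sum_congr rfl fun k _ => Complex.mul_conj' _
  have hre := congrArg Complex.re hI
  rw [Complex.sub_re, Complex.add_re, Complex.ofReal_re, Complex.ofReal_re] at hre
  have h1 := hilbert_aux lam δ hδ hsep c
  have h2 := hilbert_aux (fun k => - lam k) δ hδ
    (fun j k hjk => by
      have := hsep k j hjk.symm
      rwa [show -lam j - -lam k = lam k - lam j by ring]) a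
  have hneg : ∑ k, ∑ j, I * (((-lam k - -lam j)⁻¹ : ℝ) : ℂ) * (a j * (starRingEnd ℂ) (a k))
      = - ∑ k, ∑ j, I * (((lam k - lam j)⁻¹ : ℝ) : ℂ) * (a j * (starRingEnd ℂ) (a k)) := by
    simp only [← Finset.sum_neg_distrib]
    refine Finset.sum_congr rfl fun k _ => Finset.sum_congr rfl fun j _ => ?_
    rw [show -lam k - -lam j = -(lam k - lam j) by ring, inv_neg]
    push_cast; ring
  rw [hneg, Complex.neg_re] at h2
  have hna : ∑ k, ‖a k‖ ^ 2 = ∑ k, ‖c k‖ ^ 2 := by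
    refine Finset.sum_congr rfl fun k _ => ?_
    have : ‖Complex.exp (Complex.I * (lam k * T))‖ = 1 := by
      rw [mul_comm, ← Complex.ofReal_mul, Complex.norm_exp_ofReal_mul_I]
    simp only [ha, norm_mul, this, mul_one]
  rw [hna] at h2
  have hexp : (T - 2 * π / δ) * ∑ k, ‖c k‖ ^ 2
      = T * ∑ k, ‖c k‖ ^ 2 - π / δ * ∑ k, ‖c k‖ ^ 2 - π / δ * ∑ k, ‖c k‖ ^ 2 := by ring
  rw [hexp, hre]
  linarith
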